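/- Let X ⊆ ℝ² be a bounded convex set with perimeter ℓ(∂X) = 2π, and let l > 0. Then ∫_{X \ X_l} p_X(x, l) dx ≤ 2πl − 2l. -/

import Mathlib

open MeasureTheory Metric Set Real Pointwise
open scoped ENNReal RealInnerProductSpace

noncomputable section

/-- The Euclidean plane. -/
abbrev Plane := EuclideanSpace ℝ (Fin 2)

/-- The unit vector in the plane making angle `θ` with the horizontal axis. -/
def needleDir (θ : ℝ) : Plane :=
  (EuclideanSpace.equiv (Fin 2) ℝ).symm ![Real.cos θ, Real.sin θ]

/-- The set of directions `θ ∈ [0, 2π)` for which the needle of length `l`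
originating at `x` has its other endpoint in `X`. -/
def needleAngles (X : Set Plane) (l : ℝ) (x : Plane) : Set ℝ :=
  {θ ∈ Set.Ico 0 (2 * π) | x + l • needleDir θ ∈ X}

/-- The pointwise probability `p_X(x, l)` that a random needle of length `l` at `x`
lies within `X`. -/
def pointwiseProb (X : Set Plane) (x : Plane) (l : ℝ) : ℝ :=
  (1 / (2 * π)) * (volume (needleAngles X l x)).toReal

/-- The Buffon probability `P_X(l)` that a random needle of length `l` originating at a
uniformly chosen point of `X` lies within `X`; taken to be `0` when `X` has zero area. -/
def buffonProb (X : Set Plane) (l : ℝ) : ℝ :=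
  if volume X = 0 then 0
  else (1 / (2 * π * (volume X).toReal)) *
    ∫ x in X, (volume (needleAngles X l x)).toReal

/-- The interior parallel `X_r`: the Minkowski difference of `X` with the closed ball
of radius `r`. -/
def innerParallel (X : Set Plane) (r : ℝ) : Set Plane :=
  {x : Plane | Metric.closedBall x r ⊆ X}

/-- The exterior parallel `X^r`: the Minkowski sum of `X` with the closed ball
of radius `r`. -/
def exterParallel (X : Set Plane) (r : ℝ) : Set Plane :=
  X + Metric.closedBall (0 : Plane) r

end

/-!
Inside a convex polygon, a needle starting at distance `t` from the nearest edge line stays in the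
half-plane of that edge, which allows only the directions with `l cos (θ - φ) ≤ t`. Integrating the
measure of these directions over the strip `0 ≤ t ≤ l` below an edge gives the edge length times
`∫ (l - l max(0, cos θ)) dθ = 2πl - 2l`, and the strips cover everything outside the inner
parallel set, so the bound for polygons follows by summing over the edges. A general `X` is
exhausted in area by inscribed polygons, whose perimeters are at most `ℓ(∂X)` because the
nearest-point projection is `1`-Lipschitz.
-/

section Topology

lemma inter_frontier_nonempty_of_isPreconnected {E : Type*} [TopologicalSpace E] {s X : Set E}
    (hs : IsPreconnected s) (hsX : (s ∩ X).Nonempty) (hsX' : (s \ X).Nonempty) :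
    (s ∩ frontier X).Nonempty := by
  by_contra! hdisj
  have hcover : s ⊆ interior X ∪ (closure X)ᶜ := fun x hx ↦ by
    by_contra hxX
    simp only [mem_union, mem_compl_iff, not_or, not_not] at hxX
    exact hdisj.subset ⟨hx, hxX.2, hxX.1⟩
  obtain ⟨x, hxs, hxX⟩ := hsX
  obtain ⟨y, hys, hyX⟩ := hsX'
  obtain ⟨z, -, hzi, hzc⟩ := hs _ _ isOpen_interior isClosed_closure.isOpen_compl hcover
    ⟨x, hxs, (hcover hxs).resolve_right (not_not.2 (subset_closure hxX))⟩
    ⟨y, hys, (hcover hys).resolve_left fun h ↦ hyX (interior_subset h)⟩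
  exact hzc (subset_closure (interior_subset hzi))

end Topology

section NormedSpace

variable {E : Type*} [NormedAddCommGroup E] [NormedSpace ℝ E]

lemma exists_add_smul_mem_frontier {X : Set E} (hX : Bornology.IsBounded X) {x v : E}
    (hx : x ∈ X) (hv : v ≠ 0) : ∃ s : ℝ, 0 ≤ s ∧ x + s • v ∈ frontier X := by
  have hray : IsPreconnected ((fun s : ℝ ↦ x + s • v) '' Ici 0) :=
    isPreconnected_Ici.image _ (by fun_prop)
  have hescape : ∃ s : ℝ, 0 ≤ s ∧ x + s • v ∉ X := by
    obtain ⟨C, hC⟩ := hX.exists_norm_le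
    have hC0 : 0 ≤ C := (norm_nonneg x).trans (hC x hx)
    have hs : 0 ≤ (C + ‖x‖ + 1) / ‖v‖ := by positivity
    refine ⟨(C + ‖x‖ + 1) / ‖v‖, hs, fun hmem ↦ ?_⟩
    have hnorm : ‖((C + ‖x‖ + 1) / ‖v‖) • v‖ = C + ‖x‖ + 1 := by
      rw [norm_smul, norm_of_nonneg hs, div_mul_cancel₀ _ (norm_ne_zero_iff.2 hv)]
    have htri := norm_sub_le (x + ((C + ‖x‖ + 1) / ‖v‖) • v) x
    rw [add_sub_cancel_left, hnorm] at htri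
    linarith [hC _ hmem]
  obtain ⟨r, hr, hrX⟩ := hescape
  obtain ⟨_, ⟨s, hs, rfl⟩, hsX⟩ := inter_frontier_nonempty_of_isPreconnected hray
    ⟨x, ⟨0, self_mem_Ici, by simp⟩, hx⟩ ⟨_, ⟨r, hr, rfl⟩, hrX⟩
  exact ⟨s, hs, hsX⟩

lemma exists_isCompact_convex_subset_interior_measure_sdiff_lt [FiniteDimensional ℝ E]
    [MeasurableSpace E] [BorelSpace E] (μ : Measure E) [μ.IsAddHaarMeasure] {X : Set E}
    (hXb : Bornology.IsBounded X) (hXc : Convex ℝ X) {x₀ : E} (hx₀ : x₀ ∈ interior X)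
    {ε : ℝ≥0∞} (hε : ε ≠ 0) :
    ∃ C, IsCompact C ∧ Convex ℝ C ∧ x₀ ∈ interior C ∧ C ⊆ interior X ∧ μ (X \ C) < ε := by
  have hcompact : IsCompact (closure X) := hXb.isCompact_closure
  have hlim : Filter.Tendsto
      (fun t : ℝ ↦ μ (closure X) - ENNReal.ofReal |t ^ Module.finrank ℝ E| * μ (closure X))
      (nhdsWithin 1 (Iio 1)) (nhds 0) := by
    have hpow : Filter.Tendsto (fun t : ℝ ↦ ENNReal.ofReal |t ^ Module.finrank ℝ E|) (nhds 1)
        (nhds 1) :=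
      (ENNReal.continuous_ofReal.comp (by fun_prop)).tendsto' _ _ (by simp)
    have hfin : μ (closure X) ≠ ∞ := hcompact.measure_lt_top.ne
    have hsub := ENNReal.Tendsto.sub (tendsto_const_nhds (x := μ (closure X)))
      (ENNReal.Tendsto.mul_const hpow (Or.inr hfin)) (Or.inl hfin)
    rw [one_mul, tsub_self] at hsub
    exact hsub.mono_left nhdsWithin_le_nhds
  obtain ⟨t, hlt, ht0, ht1⟩ := ((hlim.eventually_lt_const hε.bot_lt).and
    (Ioo_mem_nhdsLT one_pos)).exists
  have hsub : AffineMap.homothety x₀ t '' closure X ⊆ interior X := by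
    rintro _ ⟨x, hx, rfl⟩
    convert hXc.add_smul_sub_mem_interior' hx hx₀ (t := 1 - t) ⟨by linarith, by linarith⟩ using 1
    rw [AffineMap.homothety_apply, vsub_eq_sub, vadd_eq_add]
    module
  have hC : IsCompact (AffineMap.homothety x₀ t '' closure X) :=
    hcompact.image (AffineMap.homothety_continuous x₀ t)
  refine ⟨_, hC, hXc.closure.affine_image _, ?_, hsub, ?_⟩
  · refine interior_maximal (image_mono (interior_subset.trans subset_closure))
      (AffineMap.homothety_isOpenMap x₀ t ht0.ne' _ isOpen_interior) ⟨x₀, hx₀, by simp⟩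
  · calc μ (X \ AffineMap.homothety x₀ t '' closure X)
        ≤ μ (closure X \ AffineMap.homothety x₀ t '' closure X) := by gcongr; exact subset_closure
      _ = μ (closure X) - ENNReal.ofReal |t ^ Module.finrank ℝ E| * μ (closure X) := by
          rw [measure_sdiff (hsub.trans (interior_subset.trans subset_closure))
            hC.measurableSet.nullMeasurableSet hC.measure_lt_top.ne,
            Measure.addHaar_image_homothety]
      _ < ε := hlt

end NormedSpace

section InnerProductSpace

variable {E : Type*} [NormedAddCommGroup E] [InnerProductSpace ℝ E]

/-- `v` is the nearest-point projection of `u` to the convex set `K`, encoded by the obtuse-angle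
criterion `norm_eq_iInf_iff_real_inner_le_zero`. -/
def IsNearestPoint (K : Set E) (u v : E) : Prop :=
  v ∈ K ∧ ∀ w ∈ K, ⟪u - v, w - v⟫ ≤ 0

lemma IsNearestPoint.norm_sub_le {K : Set E} {u v u' v' : E} (h : IsNearestPoint K u v)
    (h' : IsNearestPoint K u' v') : ‖v - v'‖ ≤ ‖u - u'‖ := by
  have hmono : ‖v - v'‖ ^ 2 ≤ ⟪u - u', v - v'⟫ := by
    have hsum : ⟪u - u', v - v'⟫ - ‖v - v'‖ ^ 2 = -⟪u - v, v' - v⟫ - ⟪u' - v', v - v'⟫ := by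
      rw [← real_inner_self_eq_norm_sq, ← neg_sub v v', inner_neg_right, neg_neg,
        ← inner_sub_left, ← inner_sub_left]
      congr 1
      abel
    linarith [h.2 v' h'.1, h'.2 v h.1]
  by_contra! hlt
  nlinarith [hmono.trans (real_inner_le_norm _ _), norm_nonneg (u - u')]

lemma IsNearestPoint.unique {K : Set E} {u v v' : E} (h : IsNearestPoint K u v)
    (h' : IsNearestPoint K u v') : v = v' :=
  sub_eq_zero.1 (norm_le_zero_iff.1 (by simpa using h.norm_sub_le h'))

lemma exists_isNearestPoint {K : Set E} (hne : K.Nonempty) (hK : IsComplete K) (hc : Convex ℝ K)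
    (u : E) : ∃ v, IsNearestPoint K u v := by
  obtain ⟨v, hv, hmin⟩ := exists_norm_eq_iInf_of_complete_convex hne hK hc u
  exact ⟨v, hv, (norm_eq_iInf_iff_real_inner_le_zero hc hv).1 hmin⟩

lemma exists_ne_zero_inner_sub_nonpos [CompleteSpace E] {K : Set E} (hc : Convex ℝ K)
    (hne : (interior K).Nonempty) {y : E} (hy : y ∉ interior K) :
    ∃ n : E, n ≠ 0 ∧ ∀ w ∈ K, ⟪n, w - y⟫ ≤ 0 := by
  obtain ⟨f, hf, hfy⟩ := geometric_hahn_banach_of_nonempty_interior_point hc hy hne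
  refine ⟨(InnerProductSpace.toDual ℝ E).symm f, by simpa using hf, fun w hw ↦ ?_⟩
  rw [InnerProductSpace.toDual_symm_apply, map_sub]
  exact sub_nonpos.2 (hfy w hw)

/-- Following the outward normal from a frontier point of `K` leads to a frontier point of `X`
whose nearest point in `K` is the starting point; the nearest-point projection is `1`-Lipschitz. -/
lemma hausdorffMeasure_frontier_mono [CompleteSpace E] [MeasurableSpace E] [BorelSpace E]
    {K X : Set E} (hc : Convex ℝ K) (hcl : IsClosed K) (hne : (interior K).Nonempty)
    (hKX : K ⊆ X) (hX : Bornology.IsBounded X) {d : ℝ} (hd : 0 ≤ d) :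
    μH[d] (frontier K) ≤ μH[d] (frontier X) := by
  choose p hp using exists_isNearestPoint (hne.mono interior_subset) hcl.isComplete hc
  have hlip : LipschitzWith 1 p := LipschitzWith.of_dist_le_mul fun u v ↦ by
    simpa [dist_eq_norm] using (hp u).norm_sub_le (hp v)
  have hsurj : frontier K ⊆ p '' frontier X := fun y hy ↦ by
    have hyK : y ∈ K := hcl.frontier_subset hy
    obtain ⟨n, hn, hnK⟩ := exists_ne_zero_inner_sub_nonpos hc hne hy.2
    obtain ⟨s, hs, hsX⟩ := exists_add_smul_mem_frontier hX (hKX hyK) hn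
    have hnear : IsNearestPoint K (y + s • n) y := ⟨hyK, fun w hw ↦ by
      rw [add_sub_cancel_left, real_inner_smul_left]
      exact mul_nonpos_of_nonneg_of_nonpos hs (hnK w hw)⟩
    exact ⟨_, hsX, (hp _).unique hnear⟩
  calc μH[d] (frontier K) ≤ μH[d] (p '' frontier X) := measure_mono hsurj
    _ ≤ μH[d] (frontier X) := by simpa using hlip.hausdorffMeasure_image_le hd (frontier X)

lemma volume_image_inner_le_hausdorffMeasure [MeasurableSpace E] [BorelSpace E] {u : E}
    (hu : ‖u‖ ≤ 1) (A : Set E) : volume ((fun x ↦ ⟪u, x⟫) '' A) ≤ μH[1] A := by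
  have hlip : LipschitzWith 1 fun x ↦ ⟪u, x⟫ := LipschitzWith.of_dist_le_mul fun x y ↦ by
    rw [Real.dist_eq, ← inner_sub_right, dist_eq_norm]
    exact (abs_real_inner_le_norm u (x - y)).trans (by gcongr; simpa using hu)
  rw [← hausdorffMeasure_real]
  simpa using hlip.hausdorffMeasure_image_le zero_le_one A

lemma exists_inner_sub_le_one_and_one_lt [CompleteSpace E] {C : Set E} (hc : Convex ℝ C)
    (hcl : IsClosed C) {x₀ z : E} (hx₀ : x₀ ∈ C) (hz : z ∉ C) :
    ∃ a : E, (∀ c ∈ C, ⟪a, c - x₀⟫ ≤ 1) ∧ 1 < ⟪a, z - x₀⟫ := by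
  obtain ⟨f, u, hfC, hfz⟩ := geometric_hahn_banach_closed_point hc hcl hz
  have hu : 0 < u - f x₀ := sub_pos.2 (hfC x₀ hx₀)
  have hinner (v : E) : ⟪(u - f x₀)⁻¹ • (InnerProductSpace.toDual ℝ E).symm f, v - x₀⟫ =
      (f v - f x₀) / (u - f x₀) := by
    rw [real_inner_smul_left, InnerProductSpace.toDual_symm_apply, map_sub, inv_mul_eq_div]
  refine ⟨(u - f x₀)⁻¹ • (InnerProductSpace.toDual ℝ E).symm f, fun c hcC ↦ ?_, ?_⟩
  · rw [hinner, div_le_one hu]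
    linarith [hfC c hcC]
  · rw [hinner, one_lt_div hu]
    linarith

end InnerProductSpace

section Polytope

variable {E : Type*} [NormedAddCommGroup E] [InnerProductSpace ℝ E]

/-- The intersection of the half-spaces `⟪a, z - x₀⟫ ≤ 1` for `a ∈ S`. Every polytope with `x₀` in
its interior has this form; normalising the right-hand sides to `1` makes distinct nonzero normals
define distinct hyperplanes. -/
def polytope (S : Finset E) (x₀ : E) : Set E :=
  {z | ∀ a ∈ S, ⟪a, z - x₀⟫ ≤ 1}

/-- The signed distance from `z` to the hyperplane `⟪a, · - x₀⟫ = 1`, positive on the side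
of `x₀`. -/
noncomputable def hyperplaneDepth (x₀ a z : E) : ℝ :=
  (1 - ⟪a, z - x₀⟫) / ‖a‖

/-- The part of `polytope S x₀` lying in the hyperplane `⟪a, · - x₀⟫ = 1`. -/
def polytopeFacet (S : Finset E) (x₀ a : E) : Set E :=
  {z ∈ polytope S x₀ | ⟪a, z - x₀⟫ = 1}

/-- The points of `polytope S x₀` within distance `r` of the facet hyperplane with normal `a`, this
hyperplane being a nearest one. The cells decompose the part of the polytope near its frontier. -/
def polytopeCell (S : Finset E) (x₀ a : E) (r : ℝ) : Set E :=
  {z ∈ polytope S x₀ | hyperplaneDepth x₀ a z ≤ r ∧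
    ∀ b ∈ S, hyperplaneDepth x₀ a z ≤ hyperplaneDepth x₀ b z}

lemma hyperplaneDepth_add (x₀ a z v : E) :
    hyperplaneDepth x₀ a (z + v) = hyperplaneDepth x₀ a z - ⟪‖a‖⁻¹ • a, v⟫ := by
  rw [hyperplaneDepth, hyperplaneDepth, add_sub_right_comm, inner_add_right, real_inner_smul_left]
  ring

lemma hyperplaneDepth_nonneg_iff {x₀ a z : E} (ha : a ≠ 0) :
    0 ≤ hyperplaneDepth x₀ a z ↔ ⟪a, z - x₀⟫ ≤ 1 := by
  rw [hyperplaneDepth, le_div_iff₀ (norm_pos_iff.2 ha), zero_mul, sub_nonneg]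

lemma hyperplaneDepth_eq_zero_iff {x₀ a z : E} (ha : a ≠ 0) :
    hyperplaneDepth x₀ a z = 0 ↔ ⟪a, z - x₀⟫ = 1 := by
  rw [hyperplaneDepth, div_eq_zero_iff, or_iff_left (norm_ne_zero_iff.2 ha), sub_eq_zero, eq_comm]

lemma hyperplaneDepth_le_add_norm (x₀ a z v : E) :
    hyperplaneDepth x₀ a z ≤ hyperplaneDepth x₀ a (z + v) + ‖v‖ := by
  have hunit : ‖‖a‖⁻¹ • a‖ ≤ 1 := by
    rw [norm_smul, norm_inv, norm_norm]
    exact inv_mul_le_one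
  have hcs : ⟪‖a‖⁻¹ • a, v⟫ ≤ ‖v‖ :=
    (real_inner_le_norm _ _).trans (mul_le_of_le_one_left (norm_nonneg v) hunit)
  linarith [hyperplaneDepth_add x₀ a z v]

lemma isClosed_polytope (S : Finset E) (x₀ : E) : IsClosed (polytope S x₀) := by
  simp only [polytope, ofPred_forall]
  exact isClosed_biInter fun a _ ↦ isClosed_le (by fun_prop) continuous_const

lemma convex_polytope (S : Finset E) (x₀ : E) : Convex ℝ (polytope S x₀) := by
  simp only [polytope, ofPred_forall, inner_sub_right, sub_le_iff_le_add]
  exact convex_iInter₂ fun a _ ↦ convex_halfSpace_le (innerSL ℝ a).isLinear _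

lemma isClosed_polytopeFacet (S : Finset E) (x₀ a : E) : IsClosed (polytopeFacet S x₀ a) :=
  (isClosed_polytope S x₀).inter (isClosed_eq (by fun_prop) continuous_const)

lemma polytopeFacet_subset_frontier {S : Finset E} {x₀ a : E} (ha : a ∈ S) :
    polytopeFacet S x₀ a ⊆ frontier (polytope S x₀) := by
  rintro z ⟨hz, haz⟩
  rw [(isClosed_polytope S x₀).frontier_eq]
  refine ⟨hz, fun hzi ↦ ?_⟩
  have hmax : IsLocalMax (fun w ↦ ⟪a, w - x₀⟫) z := by
    filter_upwards [mem_interior_iff_mem_nhds.1 hzi] with w hw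
    rw [haz]
    exact hw a ha
  have hderiv : HasFDerivAt (fun w ↦ ⟪a, w - x₀⟫) (innerSL ℝ a) z :=
    (innerSL ℝ a).hasFDerivAt.comp z ((hasFDerivAt_id z).sub_const x₀)
  have ha0 : a = 0 :=
    innerSL_inj.1 ((hmax.hasFDerivAt_eq_zero hderiv).trans (map_zero _).symm)
  simp [ha0] at haz

lemma subsingleton_polytopeFacet_inter [Fact (Module.finrank ℝ E = 2)] {S : Finset E}
    {x₀ a b : E} (hab : a ≠ b) :
    (polytopeFacet S x₀ a ∩ polytopeFacet S x₀ b).Subsingleton := by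
  rintro z ⟨⟨-, haz⟩, -, hbz⟩ w ⟨⟨-, haw⟩, -, hbw⟩
  have hz0 : z - x₀ ≠ 0 := fun h ↦ by simp [h] at haz
  have hspan : w - x₀ ∈ Submodule.span ℝ {z - x₀} :=
    Submodule.mem_span_singleton_of_inner_eq_zero_of_inner_eq_zero (sub_ne_zero.2 hab) hz0
      (by rw [inner_sub_left, haw, hbw, sub_self]) (by rw [inner_sub_left, haz, hbz, sub_self])
  obtain ⟨c, hc⟩ := Submodule.mem_span_singleton.1 hspan
  have hc1 : c = 1 := by rwa [← hc, real_inner_smul_right, haz, mul_one] at haw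
  rw [hc1, one_smul] at hc
  exact sub_left_injective hc

lemma sum_hausdorffMeasure_polytopeFacet_le [Fact (Module.finrank ℝ E = 2)] [MeasurableSpace E]
    [BorelSpace E] (S : Finset E) (x₀ : E) :
    ∑ a ∈ S, μH[1] (polytopeFacet S x₀ a) ≤ μH[1] (frontier (polytope S x₀)) := by
  have := Measure.nullSingletonClass_hausdorff E one_pos
  rw [← measure_biUnion_finset₀
    (fun a _ b _ hab ↦ (subsingleton_polytopeFacet_inter hab).measure_zero _)
    fun a _ ↦ (isClosed_polytopeFacet S x₀ a).measurableSet.nullMeasurableSet]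
  exact measure_mono (iUnion₂_subset fun a ha ↦ polytopeFacet_subset_frontier ha)

lemma exists_mem_polytopeCell {S : Finset E} (hS : ∀ a ∈ S, a ≠ 0) {x₀ z : E} {r : ℝ}
    (hz : z ∈ polytope S x₀) (hzr : ¬ closedBall z r ⊆ polytope S x₀) :
    ∃ a ∈ S, z ∈ polytopeCell S x₀ a r := by
  obtain ⟨w, hwz, hw⟩ := not_subset.1 hzr
  simp only [polytope, mem_ofPred_eq, not_forall] at hw
  obtain ⟨b, hb, hbw⟩ := hw
  have hbr : hyperplaneDepth x₀ b z ≤ r := by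
    rw [← hyperplaneDepth_nonneg_iff (hS b hb), not_le] at hbw
    have hlip := hyperplaneDepth_le_add_norm x₀ b z (w - z)
    rw [add_sub_cancel, ← dist_eq_norm] at hlip
    linarith [mem_closedBall.1 hwz]
  obtain ⟨a, ha, hmin⟩ := S.exists_min_image (fun a ↦ hyperplaneDepth x₀ a z) ⟨b, hb⟩
  exact ⟨a, ha, hz, (hmin b hb).trans hbr, hmin⟩

lemma add_hyperplaneDepth_smul_mem_polytopeFacet {S : Finset E} (hS : ∀ a ∈ S, a ≠ 0)
    {x₀ a z : E} {r : ℝ} (ha : a ∈ S) (hz : z ∈ polytopeCell S x₀ a r) :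
    z + hyperplaneDepth x₀ a z • ‖a‖⁻¹ • a ∈ polytopeFacet S x₀ a := by
  obtain ⟨hzP, -, hmin⟩ := hz
  have hunit : ‖‖a‖⁻¹ • a‖ = 1 := norm_smul_inv_norm (𝕜 := ℝ) (hS a ha)
  have hdist : ‖hyperplaneDepth x₀ a z • ‖a‖⁻¹ • a‖ = hyperplaneDepth x₀ a z := by
    rw [norm_smul, hunit, mul_one,
      norm_of_nonneg ((hyperplaneDepth_nonneg_iff (hS a ha)).2 (hzP a ha))]
  refine ⟨fun b hb ↦ (hyperplaneDepth_nonneg_iff (hS b hb)).1 ?_,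
    (hyperplaneDepth_eq_zero_iff (hS a ha)).1 ?_⟩
  · linarith [hyperplaneDepth_le_add_norm x₀ b z (hyperplaneDepth x₀ a z • ‖a‖⁻¹ • a), hmin b hb]
  · rw [hyperplaneDepth_add, real_inner_smul_right, real_inner_self_eq_norm_sq, hunit]
    ring

/-- Finitely many half-spaces separating `C` from points of the compact frontier of `X` suffice:
their intersection is connected and misses that frontier. -/
lemma exists_polytope_between [FiniteDimensional ℝ E] {C X : Set E} (hcl : IsClosed C)
    (hc : Convex ℝ C) (hCX : C ⊆ interior X) (hX : Bornology.IsBounded X) {x₀ : E} (hx₀ : x₀ ∈ C) :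
    ∃ S : Finset E, (∀ a ∈ S, a ≠ 0) ∧ C ⊆ polytope S x₀ ∧ polytope S x₀ ⊆ X := by
  classical
  have hsep : ∀ z ∈ frontier X, ∃ a : E, (∀ c ∈ C, ⟪a, c - x₀⟫ ≤ 1) ∧ 1 < ⟪a, z - x₀⟫ :=
    fun z hz ↦ exists_inner_sub_le_one_and_one_lt hc hcl hx₀ fun h ↦ hz.2 (hCX h)
  choose! a haC haz using hsep
  have hfr : IsCompact (frontier X) :=
    hX.isCompact_closure.of_isClosed_subset isClosed_frontier frontier_subset_closure
  obtain ⟨t, ht, hcover⟩ := hfr.elim_nhds_subcover (fun z ↦ {w | 1 < ⟪a z, w - x₀⟫})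
    fun z hz ↦ (isOpen_lt continuous_const (by fun_prop)).mem_nhds (haz z hz)
  have hCP : C ⊆ polytope (t.image a) x₀ := fun c hcC ↦
    Finset.forall_mem_image.2 fun z hz ↦ haC z (ht z hz) c hcC
  refine ⟨t.image a, Finset.forall_mem_image.2 fun z hz haz0 ↦ ?_, hCP, ?_⟩
  · have := haz z (ht z hz)
    rw [haz0, inner_zero_left] at this
    linarith
  · by_contra hPX
    obtain ⟨w, hwP, hwX⟩ := inter_frontier_nonempty_of_isPreconnected
      (convex_polytope (t.image a) x₀).isPreconnected
      ⟨x₀, hCP hx₀, interior_subset (hCX hx₀)⟩ (sdiff_nonempty.2 hPX)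
    obtain ⟨z, hz, hzw⟩ := mem_iUnion₂.1 (hcover hwX)
    exact (hwP (a z) (Finset.mem_image_of_mem a hz)).not_gt hzw

lemma exists_polytope_subset_measure_sdiff_lt [FiniteDimensional ℝ E] [MeasurableSpace E]
    [BorelSpace E] (μ : Measure E) [μ.IsAddHaarMeasure] {X : Set E} (hXb : Bornology.IsBounded X)
    (hXc : Convex ℝ X) (hXi : (interior X).Nonempty) {ε : ℝ≥0∞} (hε : ε ≠ 0) :
    ∃ (S : Finset E) (x₀ : E), (∀ a ∈ S, a ≠ 0) ∧ polytope S x₀ ⊆ X ∧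
      (interior (polytope S x₀)).Nonempty ∧ μ (X \ polytope S x₀) < ε := by
  obtain ⟨x₀, hx₀⟩ := hXi
  obtain ⟨C, hC, hCc, hx₀C, hCX, hCε⟩ :=
    exists_isCompact_convex_subset_interior_measure_sdiff_lt μ hXb hXc hx₀ hε
  obtain ⟨S, hS, hCP, hPX⟩ := exists_polytope_between hC.isClosed hCc hCX hXb
    (interior_subset hx₀C)
  exact ⟨S, x₀, hS, hPX, ⟨x₀, interior_mono hCP hx₀C⟩,
    (measure_mono (sdiff_subset_sdiff_right hCP)).trans_lt hCε⟩

end Polytope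

section Fubini

lemma setLIntegral_measure_sep_comm {α β : Type*} [MeasurableSpace α] [MeasurableSpace β]
    (μ : Measure α) (ν : Measure β) [SFinite μ] [SFinite ν] {R : Set (α × β)}
    (hR : MeasurableSet R) (s : Set α) (t : Set β) :
    ∫⁻ x in s, ν {y ∈ t | (x, y) ∈ R} ∂μ = ∫⁻ y in t, μ {x ∈ s | (x, y) ∈ R} ∂ν := by
  calc ∫⁻ x in s, ν {y ∈ t | (x, y) ∈ R} ∂μ
      = ∫⁻ x in s, ν.restrict t (Prod.mk x ⁻¹' R) ∂μ := by
        simp only [Measure.restrict_apply (measurable_prodMk_left hR), inter_comm _ t]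
        rfl
    _ = ∫⁻ y in t, μ.restrict s ((fun x ↦ (x, y)) ⁻¹' R) ∂ν := by
        rw [← Measure.prod_apply hR, Measure.prod_apply_symm hR]
    _ = ∫⁻ y in t, μ {x ∈ s | (x, y) ∈ R} ∂ν := by
        simp only [Measure.restrict_apply (measurable_prodMk_right hR), inter_comm _ s]
        rfl

end Fubini

section NeedleDirection

lemma inner_needleDir (θ φ : ℝ) : ⟪needleDir θ, needleDir φ⟫ = cos (θ - φ) := by
  simp only [needleDir, PiLp.inner_apply, Fin.sum_univ_two, cos_sub, RCLike.inner_apply,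
    conj_trivial, PiLp.continuousLinearEquiv_symm_apply, Matrix.cons_val_zero,
    Matrix.cons_val_one]
  ring

lemma norm_needleDir (θ : ℝ) : ‖needleDir θ‖ = 1 := by
  rw [← sq_eq_sq₀ (norm_nonneg _) zero_le_one, ← real_inner_self_eq_norm_sq, inner_needleDir,
    sub_self, cos_zero, one_pow]

lemma continuous_needleDir : Continuous needleDir := by
  unfold needleDir
  fun_prop

lemma exists_needleDir_eq {u : Plane} (hu : ‖u‖ = 1) : ∃ φ, needleDir φ = u := by
  have hsq : u 0 ^ 2 + u 1 ^ 2 = 1 := by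
    rw [← Fin.sum_univ_two fun i ↦ u i ^ 2, ← EuclideanSpace.real_norm_sq_eq, hu, one_pow]
  obtain ⟨φ, hcos, hsin⟩ : ∃ φ, cos φ = u 0 ∧ sin φ = u 1 := by
    have hz : ‖(⟨u 0, u 1⟩ : ℂ)‖ = 1 := by
      rw [← sq_eq_sq₀ (norm_nonneg _) zero_le_one, Complex.sq_norm, Complex.normSq_mk, one_pow,
        ← sq, ← sq, hsq]
    refine ⟨Complex.arg ⟨u 0, u 1⟩, ?_, ?_⟩
    · simpa [hz] using Complex.norm_mul_cos_arg ⟨u 0, u 1⟩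
    · simpa [hz] using Complex.norm_mul_sin_arg ⟨u 0, u 1⟩
  refine ⟨φ, ?_⟩
  ext i
  fin_cases i <;> simp [needleDir, hcos, hsin]

lemma measurePreserving_inner_needleDir (φ c : ℝ) :
    MeasurePreserving fun x : Plane ↦ (⟪needleDir (φ + π / 2), x⟫, c - ⟪needleDir φ, x⟫) := by
  have hon : Orthonormal ℝ ![needleDir (φ + π / 2), needleDir φ] := by
    rw [orthonormal_iff_ite]
    intro i j
    fin_cases i <;> fin_cases j <;> simp [inner_needleDir, norm_needleDir]
  let b : OrthonormalBasis (Fin 2) ℝ Plane := OrthonormalBasis.mk hon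
    (hon.linearIndependent.span_eq_top_of_card_eq_finrank (by simp)).ge
  have hcoord := ((MeasurePreserving.id (volume : Measure ℝ)).prod
    (Measure.measurePreserving_sub_left volume c)).comp
    ((volume_preserving_finTwoArrow ℝ).comp
      ((PiLp.volume_preserving_ofLp (Fin 2)).comp b.measurePreserving_repr))
  have hfun : (fun x : Plane ↦ (⟪needleDir (φ + π / 2), x⟫, c - ⟪needleDir φ, x⟫)) =
      Prod.map id (c - ·) ∘ MeasurableEquiv.finTwoArrow ∘ WithLp.ofLp ∘ b.repr := by
    funext x
    simp [b, MeasurableEquiv.finTwoArrow, OrthonormalBasis.repr_apply_apply]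
  rw [hfun]
  exact hcoord

lemma setLIntegral_comp_inner_needleDir (φ c : ℝ) {T I : Set ℝ} (hT : MeasurableSet T)
    (hI : MeasurableSet I) {G : ℝ → ℝ≥0∞} (hG : Measurable G) :
    ∫⁻ x in {x : Plane | ⟪needleDir (φ + π / 2), x⟫ ∈ T ∧ c - ⟪needleDir φ, x⟫ ∈ I},
      G (c - ⟪needleDir φ, x⟫) = volume T * ∫⁻ t in I, G t := by
  calc ∫⁻ x in {x : Plane | ⟪needleDir (φ + π / 2), x⟫ ∈ T ∧ c - ⟪needleDir φ, x⟫ ∈ I},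
        G (c - ⟪needleDir φ, x⟫)
      = ∫⁻ p in T ×ˢ I, G p.2 :=
        (measurePreserving_inner_needleDir φ c).setLIntegral_comp_preimage (hT.prod hI)
          (hG.comp measurable_snd)
    _ = ∫⁻ _ in T, ∫⁻ t in I, G t := by
        rw [Measure.volume_eq_prod, ← Measure.prod_restrict,
          lintegral_prod (fun p : ℝ × ℝ ↦ G p.2) (hG.comp measurable_snd).aemeasurable]
    _ = volume T * ∫⁻ t in I, G t := by rw [setLIntegral_const, mul_comm]

end NeedleDirection

section HalfPlane

/-- The directions in which a needle of length `l` stays inside a half-plane with outward normal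
`needleDir φ`, when it starts in that half-plane at distance `t` from the boundary line. -/
def halfPlaneAngles (l φ t : ℝ) : Set ℝ :=
  {θ ∈ Ico 0 (2 * π) | l * cos (θ - φ) ≤ t}

lemma halfPlaneAngles_mono (l φ : ℝ) : Monotone (halfPlaneAngles l φ) :=
  fun _ _ hst _ hθ ↦ ⟨hθ.1, hθ.2.trans hst⟩

lemma integral_max_zero_cos_sub (φ : ℝ) : ∫ θ in 0..2 * π, max 0 (cos (θ - φ)) = 2 := by
  have hper : Function.Periodic (fun θ ↦ max 0 (cos θ)) (2 * π) := fun θ ↦ by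
    simp only [cos_add_two_pi]
  have hint (a b : ℝ) : IntervalIntegrable (fun θ ↦ max 0 (cos θ)) volume a b :=
    (by fun_prop : Continuous fun θ ↦ max 0 (cos θ)).intervalIntegrable a b
  have hright : ∫ θ in -(π / 2)..π / 2, max 0 (cos θ) = 2 := by
    have hcongr : ∫ θ in -(π / 2)..π / 2, max 0 (cos θ) = ∫ θ in -(π / 2)..π / 2, cos θ :=
      intervalIntegral.integral_congr fun θ hθ ↦ by
        rw [uIcc_of_le (by linarith [pi_pos])] at hθ
        exact max_eq_right (cos_nonneg_of_mem_Icc hθ)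
    rw [hcongr, integral_cos, sin_neg, sin_pi_div_two]
    norm_num
  have hleft : ∫ θ in π / 2..-(π / 2) + 2 * π, max 0 (cos θ) = 0 :=
    intervalIntegral.integral_zero_ae (ae_of_all _ fun θ hθ ↦ by
      rw [uIoc_of_le (by linarith [pi_pos])] at hθ
      exact max_eq_left (cos_nonpos_of_pi_div_two_le_of_le hθ.1.le (by linarith [hθ.2])))
  calc ∫ θ in 0..2 * π, max 0 (cos (θ - φ))
      = ∫ θ in -φ..-φ + 2 * π, max 0 (cos θ) := by
        rw [intervalIntegral.integral_comp_sub_right (fun θ ↦ max 0 (cos θ)), zero_sub,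
          sub_eq_neg_add]
    _ = ∫ θ in -(π / 2)..-(π / 2) + 2 * π, max 0 (cos θ) :=
        hper.intervalIntegral_add_eq _ _
    _ = 2 := by
        rw [← intervalIntegral.integral_add_adjacent_intervals (hint _ (π / 2)) (hint _ _),
          hright, hleft, add_zero]

lemma lintegral_volume_halfPlaneAngles (φ : ℝ) {l : ℝ} (hl : 0 ≤ l) :
    ∫⁻ t in Icc 0 l, volume (halfPlaneAngles l φ t) = ENNReal.ofReal (2 * π * l - 2 * l) := by
  have hsection (θ : ℝ) :
      {t ∈ Icc 0 l | l * cos (θ - φ) ≤ t} = Icc (l * max 0 (cos (θ - φ))) l := by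
    ext t
    rw [mul_max_of_nonneg _ _ hl, mul_zero]
    simp only [mem_ofPred_eq, mem_Icc, max_le_iff]
    tauto
  have hcont : Continuous fun θ ↦ l - l * max 0 (cos (θ - φ)) := by fun_prop
  have hnonneg (θ : ℝ) : 0 ≤ l - l * max 0 (cos (θ - φ)) :=
    sub_nonneg.2 (mul_le_of_le_one_right hl (max_le zero_le_one (cos_le_one _)))
  calc ∫⁻ t in Icc 0 l, volume (halfPlaneAngles l φ t)
      = ∫⁻ θ in Ico 0 (2 * π), volume {t ∈ Icc 0 l | l * cos (θ - φ) ≤ t} :=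
        setLIntegral_measure_sep_comm volume volume
          (R := {p : ℝ × ℝ | l * cos (p.2 - φ) ≤ p.1})
          (measurableSet_le (by fun_prop) measurable_fst) _ _
    _ = ∫⁻ θ in Ioc 0 (2 * π), ENNReal.ofReal (l - l * max 0 (cos (θ - φ))) := by
        simp only [hsection, Real.volume_Icc, restrict_Ico_eq_restrict_Ioc]
    _ = ENNReal.ofReal (∫ θ in 0..2 * π, (l - l * max 0 (cos (θ - φ)))) := by
        rw [intervalIntegral.integral_of_le two_pi_pos.le, ofReal_integral_eq_lintegral_ofReal
          (hcont.integrableOn_Icc.mono_set Ioc_subset_Icc_self) (ae_of_all _ hnonneg)]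
    _ = ENNReal.ofReal (2 * π * l - 2 * l) := by
        rw [intervalIntegral.integral_sub (continuous_const.intervalIntegrable _ _)
            ((by fun_prop : Continuous fun θ ↦ l * max 0 (cos (θ - φ))).intervalIntegrable _ _),
          intervalIntegral.integral_const, intervalIntegral.integral_const_mul,
          integral_max_zero_cos_sub, sub_zero, smul_eq_mul, mul_comm l 2]

end HalfPlane

section NeedleAngles

lemma volume_needleAngles_le (X : Set Plane) (l : ℝ) (x : Plane) :
    volume (needleAngles X l x) ≤ ENNReal.ofReal (2 * π) := by
  calc volume (needleAngles X l x) ≤ volume (Ico 0 (2 * π)) := measure_mono (sep_subset _ _)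
    _ = ENNReal.ofReal (2 * π) := by rw [Real.volume_Ico, sub_zero]

lemma ofReal_pointwiseProb (X : Set Plane) (x : Plane) (l : ℝ) :
    ENNReal.ofReal (pointwiseProb X x l) =
      ENNReal.ofReal (1 / (2 * π)) * volume (needleAngles X l x) := by
  rw [pointwiseProb, ENNReal.ofReal_mul (by positivity), ENNReal.ofReal_toReal
    (ne_top_of_le_ne_top ENNReal.ofReal_ne_top (volume_needleAngles_le X l x))]

lemma measurableSet_add_smul_needleDir_mem {M : Set Plane} (hM : MeasurableSet M) (l : ℝ) :
    MeasurableSet {q : Plane × ℝ | q.1 + l • needleDir q.2 ∈ M} := by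
  have := continuous_needleDir
  exact (by fun_prop : Continuous fun q : Plane × ℝ ↦ q.1 + l • needleDir q.2).measurable hM

lemma measurable_volume_needleAngles {M : Set Plane} (hM : MeasurableSet M) (l : ℝ) :
    Measurable fun x ↦ volume (needleAngles M l x) :=
  measurable_measure_prodMk_left
    ((measurable_snd measurableSet_Ico).inter (measurableSet_add_smul_needleDir_mem hM l))

lemma lintegral_volume_needleAngles {M : Set Plane} (hM : MeasurableSet M) (l : ℝ) :
    ∫⁻ x, volume (needleAngles M l x) = ENNReal.ofReal (2 * π) * volume M := by
  calc ∫⁻ x, volume (needleAngles M l x)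
      = ∫⁻ θ in Ico 0 (2 * π), volume {x : Plane | x + l • needleDir θ ∈ M} := by
        simpa [needleAngles] using setLIntegral_measure_sep_comm volume volume
          (measurableSet_add_smul_needleDir_mem hM l) univ (Ico 0 (2 * π))
    _ = ∫⁻ _ in Ico 0 (2 * π), volume M :=
        lintegral_congr fun θ ↦ measure_preimage_add_right volume (l • needleDir θ) M
    _ = ENNReal.ofReal (2 * π) * volume M := by
        rw [setLIntegral_const, Real.volume_Ico, sub_zero, mul_comm]

/-- Both error terms come from needles with an end in `X \ P`. -/
lemma lintegral_volume_needleAngles_sdiff_innerParallel_le_add {P X : Set Plane} (hPX : P ⊆ X)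
    (l : ℝ) :
    ∫⁻ x in X \ innerParallel X l, volume (needleAngles X l x) ≤
      (∫⁻ x in P \ innerParallel P l, volume (needleAngles P l x)) +
        2 * ENNReal.ofReal (2 * π) * volume (X \ P) := by
  set M := toMeasurable volume (X \ P)
  have hregion : X \ innerParallel X l ⊆ (P \ innerParallel P l) ∪ (X \ P) := fun x hx ↦
    or_iff_not_imp_right.2 fun hxP ↦
      ⟨not_not.1 fun h ↦ hxP ⟨hx.1, h⟩, fun h ↦ hx.2 (h.trans hPX)⟩
  have hangles (x : Plane) : volume (needleAngles X l x) ≤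
      volume (needleAngles P l x) + volume (needleAngles M l x) := by
    refine (measure_mono fun θ hθ ↦ ?_).trans (measure_union_le _ _)
    exact (em (x + l • needleDir θ ∈ P)).imp (fun h ↦ ⟨hθ.1, h⟩)
      fun h ↦ ⟨hθ.1, subset_toMeasurable _ _ ⟨hθ.2, h⟩⟩
  calc ∫⁻ x in X \ innerParallel X l, volume (needleAngles X l x)
      ≤ (∫⁻ x in P \ innerParallel P l, volume (needleAngles X l x)) +
        ∫⁻ x in X \ P, volume (needleAngles X l x) :=
        (lintegral_mono_set hregion).trans (lintegral_union_le _ _ _)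
    _ ≤ (∫⁻ x in P \ innerParallel P l,
          (volume (needleAngles P l x) + volume (needleAngles M l x))) +
        ∫⁻ _ in X \ P, ENNReal.ofReal (2 * π) := by
        gcongr with x x
        · exact hangles x
        · exact volume_needleAngles_le X l x
    _ ≤ ((∫⁻ x in P \ innerParallel P l, volume (needleAngles P l x)) +
          ∫⁻ x, volume (needleAngles M l x)) + ENNReal.ofReal (2 * π) * volume (X \ P) := by
        rw [lintegral_add_right _ (measurable_volume_needleAngles
          (measurableSet_toMeasurable _ _) l), setLIntegral_const]
        gcongr
        exact Measure.restrict_le_self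
    _ = (∫⁻ x in P \ innerParallel P l, volume (needleAngles P l x)) +
        2 * ENNReal.ofReal (2 * π) * volume (X \ P) := by
        rw [lintegral_volume_needleAngles (measurableSet_toMeasurable _ _), measure_toMeasurable]
        ring

end NeedleAngles

section BoundaryIntegral

lemma needleAngles_polytope_subset_halfPlaneAngles {S : Finset Plane} {x₀ a : Plane} (ha : a ∈ S)
    (ha0 : a ≠ 0) {φ : ℝ} (hφ : needleDir φ = ‖a‖⁻¹ • a) (l : ℝ) (x : Plane) :
    needleAngles (polytope S x₀) l x ⊆ halfPlaneAngles l φ (hyperplaneDepth x₀ a x) := fun θ hθ ↦ by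
  have hend := (hyperplaneDepth_nonneg_iff ha0).2 (hθ.2 a ha)
  rw [hyperplaneDepth_add, ← hφ, real_inner_smul_right, inner_needleDir, ← cos_neg, neg_sub] at hend
  exact ⟨hθ.1, sub_nonneg.1 hend⟩

lemma lintegral_polytopeCell_volume_needleAngles_le {S : Finset Plane} (hS : ∀ a ∈ S, a ≠ 0)
    {x₀ a : Plane} (ha : a ∈ S) {l : ℝ} (hl : 0 ≤ l) :
    ∫⁻ x in polytopeCell S x₀ a l, volume (needleAngles (polytope S x₀) l x) ≤
      μH[1] (polytopeFacet S x₀ a) * ENNReal.ofReal (2 * π * l - 2 * l) := by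
  obtain ⟨φ, hφ⟩ : ∃ φ, needleDir φ = ‖a‖⁻¹ • a :=
    exists_needleDir_eq (norm_smul_inv_norm (𝕜 := ℝ) (hS a ha))
  set c := hyperplaneDepth x₀ a 0
  have hdepth (x : Plane) : hyperplaneDepth x₀ a x = c - ⟪needleDir φ, x⟫ := by
    rw [← zero_add x, hyperplaneDepth_add, hφ, zero_add]
  set T := toMeasurable volume ((⟪needleDir (φ + π / 2), ·⟫) '' polytopeFacet S x₀ a)
  have hTvol : volume T ≤ μH[1] (polytopeFacet S x₀ a) :=
    (measure_toMeasurable _).trans_le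
      (volume_image_inner_le_hausdorffMeasure (norm_needleDir _).le _)
  have hstrip : polytopeCell S x₀ a l ⊆
      {x | ⟪needleDir (φ + π / 2), x⟫ ∈ T ∧ c - ⟪needleDir φ, x⟫ ∈ Icc 0 l} := fun x hx ↦ by
    rw [mem_ofPred_eq, ← hdepth]
    refine ⟨subset_toMeasurable _ _ ⟨_, add_hyperplaneDepth_smul_mem_polytopeFacet hS ha hx, ?_⟩,
      (hyperplaneDepth_nonneg_iff (hS a ha)).2 (hx.1 a ha), hx.2.1⟩
    simp only [← hφ, inner_add_right, real_inner_smul_right, inner_needleDir, add_sub_cancel_left,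
      cos_pi_div_two, mul_zero, add_zero]
  calc ∫⁻ x in polytopeCell S x₀ a l, volume (needleAngles (polytope S x₀) l x)
      ≤ ∫⁻ x in {x | ⟪needleDir (φ + π / 2), x⟫ ∈ T ∧ c - ⟪needleDir φ, x⟫ ∈ Icc 0 l},
          volume (halfPlaneAngles l φ (c - ⟪needleDir φ, x⟫)) :=
        lintegral_mono' (Measure.restrict_mono_set _ hstrip) fun x ↦ measure_mono
          (hdepth x ▸ needleAngles_polytope_subset_halfPlaneAngles ha (hS a ha) hφ l x)
    _ = volume T * ENNReal.ofReal (2 * π * l - 2 * l) := by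
        rw [setLIntegral_comp_inner_needleDir φ c (measurableSet_toMeasurable _ _)
          measurableSet_Icc (G := fun t ↦ volume (halfPlaneAngles l φ t))
          (Monotone.measurable fun s t hst ↦ measure_mono (halfPlaneAngles_mono l φ hst)),
          lintegral_volume_halfPlaneAngles φ hl]
    _ ≤ μH[1] (polytopeFacet S x₀ a) * ENNReal.ofReal (2 * π * l - 2 * l) := by gcongr

lemma lintegral_polytope_sdiff_innerParallel_le {S : Finset Plane} (hS : ∀ a ∈ S, a ≠ 0)
    (x₀ : Plane) {l : ℝ} (hl : 0 ≤ l) :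
    ∫⁻ x in polytope S x₀ \ innerParallel (polytope S x₀) l,
        volume (needleAngles (polytope S x₀) l x) ≤
      μH[1] (frontier (polytope S x₀)) * ENNReal.ofReal (2 * π * l - 2 * l) := by
  have : Fact (Module.finrank ℝ Plane = 2) := ⟨finrank_euclideanSpace_fin⟩
  have hcover : polytope S x₀ \ innerParallel (polytope S x₀) l ⊆
      ⋃ a : S, polytopeCell S x₀ a l := fun z hz ↦ by
    obtain ⟨a, ha, hza⟩ := exists_mem_polytopeCell hS hz.1 hz.2
    exact mem_iUnion.2 ⟨⟨a, ha⟩, hza⟩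
  calc ∫⁻ x in polytope S x₀ \ innerParallel (polytope S x₀) l,
        volume (needleAngles (polytope S x₀) l x)
      ≤ ∑' a : S, ∫⁻ x in polytopeCell S x₀ a l, volume (needleAngles (polytope S x₀) l x) :=
        (lintegral_mono_set hcover).trans (lintegral_iUnion_le _ _)
    _ = ∑ a ∈ S, ∫⁻ x in polytopeCell S x₀ a l, volume (needleAngles (polytope S x₀) l x) :=
        Finset.tsum_subtype S fun a ↦
          ∫⁻ x in polytopeCell S x₀ a l, volume (needleAngles (polytope S x₀) l x)
    _ ≤ ∑ a ∈ S, μH[1] (polytopeFacet S x₀ a) * ENNReal.ofReal (2 * π * l - 2 * l) :=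
        Finset.sum_le_sum fun a ha ↦ lintegral_polytopeCell_volume_needleAngles_le hS ha hl
    _ ≤ μH[1] (frontier (polytope S x₀)) * ENNReal.ofReal (2 * π * l - 2 * l) := by
        rw [← Finset.sum_mul]
        gcongr
        exact sum_hausdorffMeasure_polytopeFacet_le S x₀

lemma lintegral_volume_needleAngles_sdiff_innerParallel_le {X : Set Plane}
    (hXb : Bornology.IsBounded X) (hXc : Convex ℝ X) {l : ℝ} (hl : 0 ≤ l) :
    ∫⁻ x in X \ innerParallel X l, volume (needleAngles X l x) ≤
      μH[1] (frontier X) * ENNReal.ofReal (2 * π * l - 2 * l) := by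
  rcases (interior X).eq_empty_or_nonempty with hempty | hne
  · have hX : X ⊆ frontier X := by
      rw [frontier, hempty, sdiff_empty]
      exact subset_closure
    rw [setLIntegral_measure_zero _ _
      (measure_mono_null (sdiff_subset.trans hX) (hXc.addHaar_frontier volume))]
    exact zero_le
  refine ENNReal.le_of_forall_pos_le_add fun ε hε _ ↦ ?_
  obtain ⟨S, x₀, hS, hPX, hPi, hvol⟩ := exists_polytope_subset_measure_sdiff_lt volume hXb hXc hne
    (ε := ε / (2 * ENNReal.ofReal (2 * π)))
    (ENNReal.div_pos (ENNReal.coe_ne_zero.2 hε.ne') (by finiteness)).ne'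
  calc ∫⁻ x in X \ innerParallel X l, volume (needleAngles X l x)
      ≤ (∫⁻ x in polytope S x₀ \ innerParallel (polytope S x₀) l,
          volume (needleAngles (polytope S x₀) l x)) +
        2 * ENNReal.ofReal (2 * π) * volume (X \ polytope S x₀) :=
        lintegral_volume_needleAngles_sdiff_innerParallel_le_add hPX l
    _ ≤ μH[1] (frontier (polytope S x₀)) * ENNReal.ofReal (2 * π * l - 2 * l) +
        2 * ENNReal.ofReal (2 * π) * (ε / (2 * ENNReal.ofReal (2 * π))) := by
        gcongr
        exact lintegral_polytope_sdiff_innerParallel_le hS x₀ hl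
    _ ≤ μH[1] (frontier X) * ENNReal.ofReal (2 * π * l - 2 * l) + ε := by
        gcongr ?_ * _ + ?_
        · exact hausdorffMeasure_frontier_mono (convex_polytope S x₀) (isClosed_polytope S x₀) hPi
            hPX hXb zero_le_one
        · exact ENNReal.mul_div_le

end BoundaryIntegral

theorem integral_pointwiseProb_le_general {X : Set Plane} (hXb : Bornology.IsBounded X)
    (hXc : Convex ℝ X) {p : ℝ} (hp : 0 ≤ p) (hper : μH[1] (frontier X) = ENNReal.ofReal p)
    {l : ℝ} (hl : 0 ≤ l) :
    ∫ x in X \ innerParallel X l, pointwiseProb X x l ≤ p * (l - l / π) := by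
  have hscale : 1 / (2 * π) * (p * (2 * π * l - 2 * l)) = p * (l - l / π) := by field_simp
  have hwidth : 0 ≤ 2 * π * l - 2 * l := by nlinarith [pi_gt_three]
  have hlintegral : ∫⁻ x in X \ innerParallel X l, ENNReal.ofReal (pointwiseProb X x l) ≤
      ENNReal.ofReal (p * (l - l / π)) := by
    simp only [ofReal_pointwiseProb]
    rw [lintegral_const_mul' _ _ ENNReal.ofReal_ne_top, ← hscale,
      ENNReal.ofReal_mul (by positivity), ENNReal.ofReal_mul hp, ← hper]
    gcongr
    exact lintegral_volume_needleAngles_sdiff_innerParallel_le hXb hXc hl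
  have hbound : 0 ≤ p * (l - l / π) := hscale ▸ by positivity
  have hnonneg (x : Plane) : 0 ≤ pointwiseProb X x l := by
    unfold pointwiseProb
    positivity
  refine (le_norm_self _).trans ((ENNReal.ofReal_le_ofReal_iff hbound).1 ?_)
  rw [ofReal_norm]
  refine (enorm_integral_le_lintegral_enorm _).trans ?_
  simpa only [Real.enorm_of_nonneg (hnonneg _)] using hlintegral

/-- the integral of the pointwise probability over `X \ X_l` is at most
`2πl − 2l` for a bounded convex set of perimeter `2π`. -/
theorem integral_pointwiseProb_le (X : Set Plane) (hXb : Bornology.IsBounded X)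
    (hXc : Convex ℝ X) (hper : μH[1] (frontier X) = ENNReal.ofReal (2 * π))
    (l : ℝ) (hl : 0 < l) :
    ∫ x in X \ innerParallel X l, pointwiseProb X x l ≤ 2 * π * l - 2 * l :=
  (integral_pointwiseProb_le_general hXb hXc two_pi_pos.le hper hl.le).trans_eq (by field_simp)
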